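/- Let a ~ N(0, I_n) be a standard Gaussian vector in ℝ^n, let x ∈ ℝ^n be nonzero with x̄ = x/‖x‖₂, let 1 < l < u, and set y = |⟨a, x⟩|. Then the matrix J := E[ y · a aᵀ · 1{l‖x‖₂ < y < u‖x‖₂} ] equals ‖x‖₂ (γ₀ I_n + β₀ x̄ x̄ᵀ), where γ₀ = E[|g| 1{l < |g| < u}] and β₀ = E[|g|³ 1{l < |g| < u}] − γ₀ for g ~ N(0,1). Moreover β₀ > 0, so x̄ is an eigenvector of J with eigenvalue ‖x‖₂(γ₀ + β₀), every vector orthogonal to x̄ is an eigenvector with eigenvalue ‖x‖₂ γ₀, and ‖x‖₂(γ₀ + β₀) > ‖x‖₂ γ₀; i.e., x̄ (up to sign) spans the leading eigenspace of J. -/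

import Mathlib

open MeasureTheory ProbabilityTheory Matrix

/-- The squared-sum Euclidean (ℓ₂) norm of a vector in `Fin d → ℝ`. -/
noncomputable def l2norm {d : ℕ} (v : Fin d → ℝ) : ℝ := Real.sqrt (∑ i, (v i) ^ 2)

/-- The standard Gaussian measure `N(0, I_n)` on `ℝ^n`. -/
noncomputable def piGauss (n : ℕ) : Measure (Fin n → ℝ) :=
  Measure.pi fun _ : Fin n => gaussianReal 0 1

/-- `γ₀ = E[|g| 1{l < |g| < u}]` for `g ~ N(0,1)`. -/
noncomputable def gamma0 (l u : ℝ) : ℝ :=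
  ∫ g, (if l < |g| ∧ |g| < u then |g| else 0) ∂(gaussianReal 0 1)

/-- `β₀ = E[|g|³ 1{l < |g| < u}] − γ₀` for `g ~ N(0,1)`. -/
noncomputable def beta0 (l u : ℝ) : ℝ :=
  (∫ g, (if l < |g| ∧ |g| < u then |g| ^ 3 else 0) ∂(gaussianReal 0 1)) - gamma0 l u

/-!
In the direction of a unit vector `v`, a standard Gaussian vector splits as `a = ⟪v, a⟫ v + r`,
where `r`, its projection to `vᗮ`, is independent of `⟪v, a⟫`. Expanding `E[f(⟪v, a⟫) a aᵀ]` along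
this splitting, the cross terms vanish, `v vᵀ` appears with coefficient `E[f(g) g²]`, and `E[f(g)]`
multiplies the projection matrix `1 - v vᵀ`. For `f(g) = |g| 1{l < |g| < u}` with `1 ≤ l`, the total
coefficient of `v vᵀ` is `E[f(g) (g² - 1)]`, which is positive because `f` is supported where
`1 < g²`.
-/

section Independence

variable {Ω : Type*} {mΩ : MeasurableSpace Ω} {P : Measure Ω} {μ : Measure ℝ} {X Y Z : Ω → ℝ}
  {f : ℝ → ℝ}

lemma integrable_mul_id_of_integrable_mul_sq (hf : Integrable f μ)
    (hf2 : Integrable (fun x ↦ f x * x ^ 2) μ) : Integrable (fun x ↦ f x * x) μ := by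
  refine (hf.norm.add hf2.norm).mono' (hf.aestronglyMeasurable.mul aestronglyMeasurable_id)
    (ae_of_all _ fun x ↦ ?_)
  simp only [norm_mul, norm_pow, Pi.add_apply]
  nlinarith [sq_nonneg (‖x‖ - 1), norm_nonneg (f x)]

lemma integrable_comp_of_hasLaw (hX : HasLaw X μ P) (hf : Integrable f μ) :
    Integrable (fun ω ↦ f (X ω)) P :=
  (hX.map_eq ▸ hf).comp_aemeasurable hX.aemeasurable

lemma integrable_comp_mul_of_indepFun (hX : HasLaw X μ P) (hf : Integrable f μ)
    (hY : Integrable Y P) (hXY : IndepFun X Y P) : Integrable (fun ω ↦ f (X ω) * Y ω) P :=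
  (hXY.comp₀ hX.aemeasurable hY.aemeasurable (hX.map_eq ▸ hf.aemeasurable)
    aemeasurable_id).integrable_mul (integrable_comp_of_hasLaw hX hf) hY

lemma integral_comp_mul_of_indepFun (hX : HasLaw X μ P) (hf : AEStronglyMeasurable f μ)
    (hY : AEMeasurable Y P) (hXY : IndepFun X Y P) :
    ∫ ω, f (X ω) * Y ω ∂P = (∫ x, f x ∂μ) * ∫ ω, Y ω ∂P := by
  rw [← hX.integral_comp hf]
  exact hXY.integral_fun_comp_mul_comp (g := id) hX.aemeasurable hY (hX.map_eq ▸ hf)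
    aestronglyMeasurable_id

theorem integral_comp_mul_add_mul_add_of_indepFun [IsFiniteMeasure P] (hX : HasLaw X μ P)
    (hf : Integrable f μ) (hf2 : Integrable (fun x ↦ f x * x ^ 2) μ)
    (hY : MemLp Y 2 P) (hZ : MemLp Z 2 P) (hY0 : ∫ ω, Y ω ∂P = 0) (hZ0 : ∫ ω, Z ω ∂P = 0)
    (hindep : IndepFun X (fun ω ↦ (Y ω, Z ω)) P) (α β : ℝ) :
    ∫ ω, f (X ω) * ((α * X ω + Y ω) * (β * X ω + Z ω)) ∂P =
      α * β * ∫ x, f x * x ^ 2 ∂μ + (∫ x, f x ∂μ) * ∫ ω, Y ω * Z ω ∂P := by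
  have hf1 : Integrable (fun x ↦ f x * x) μ := integrable_mul_id_of_integrable_mul_sq hf hf2
  have hYZ : Integrable (fun ω ↦ Y ω * Z ω) P := hY.integrable_mul hZ
  have hindepYZ : IndepFun X (fun ω ↦ Y ω * Z ω) P :=
    hindep.comp (ψ := fun y : ℝ × ℝ ↦ y.1 * y.2) measurable_id (by fun_prop)
  have hY1 : Integrable Y P := hY.integrable one_le_two
  have hZ1 : Integrable Z P := hZ.integrable one_le_two
  have hW : Integrable (fun ω ↦ α * Z ω + β * Y ω) P :=
    (hZ1.const_mul α).add (hY1.const_mul β)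
  have hW0 : ∫ ω, α * Z ω + β * Y ω ∂P = 0 := by
    rw [integral_add (hZ1.const_mul α) (hY1.const_mul β)]
    simp [integral_const_mul, hY0, hZ0]
  have hindepW : IndepFun X (fun ω ↦ α * Z ω + β * Y ω) P :=
    hindep.comp (ψ := fun y : ℝ × ℝ ↦ α * y.2 + β * y.1) measurable_id (by fun_prop)
  have hsq : Integrable (fun ω ↦ α * β * (f (X ω) * X ω ^ 2)) P :=
    (integrable_comp_of_hasLaw hX hf2).const_mul _
  have hcross := integrable_comp_mul_of_indepFun hX hf1 hW hindepW
  calc ∫ ω, f (X ω) * ((α * X ω + Y ω) * (β * X ω + Z ω)) ∂P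
      = ∫ ω, α * β * (f (X ω) * X ω ^ 2) + f (X ω) * X ω * (α * Z ω + β * Y ω)
          + f (X ω) * (Y ω * Z ω) ∂P := by
        congr with ω
        ring
    _ = α * β * ∫ ω, f (X ω) * X ω ^ 2 ∂P + ∫ ω, f (X ω) * X ω * (α * Z ω + β * Y ω) ∂P
          + ∫ ω, f (X ω) * (Y ω * Z ω) ∂P := by
        rw [integral_add (by exact hsq.add hcross)
          (integrable_comp_mul_of_indepFun hX hf hYZ hindepYZ), integral_add hsq hcross,
          integral_const_mul]
    _ = α * β * ∫ x, f x * x ^ 2 ∂μ + (∫ x, f x ∂μ) * ∫ ω, Y ω * Z ω ∂P := by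
        rw [integral_comp_mul_of_indepFun hX hf1.aestronglyMeasurable hW.aemeasurable hindepW,
          integral_comp_mul_of_indepFun hX hf.aestronglyMeasurable hYZ.aemeasurable hindepYZ,
          ← hX.integral_comp hf2.aestronglyMeasurable, hW0, mul_zero, add_zero]
        rfl

end Independence

section StdGaussian

open scoped RealInnerProductSpace

variable {E : Type*} [NormedAddCommGroup E] [InnerProductSpace ℝ E] [FiniteDimensional ℝ E]
  [MeasurableSpace E] [BorelSpace E]

lemma memLp_two_inner_stdGaussian (p : E) : MemLp (fun a ↦ ⟪p, a⟫) 2 (stdGaussian E) :=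
  IsGaussian.memLp_two_id.const_inner p

lemma integral_inner_stdGaussian (p : E) : ∫ a, ⟪p, a⟫ ∂stdGaussian E = 0 :=
  integral_strongDual_stdGaussian (innerSL ℝ p)

lemma covariance_inner_stdGaussian (p q : E) :
    cov[fun a ↦ ⟪p, a⟫, fun a ↦ ⟪q, a⟫; stdGaussian E] = ⟪p, q⟫ := by
  rw [← covarianceBilin_apply_eq_cov IsGaussian.memLp_two_id, covarianceBilin_stdGaussian,
    innerSL_apply_apply]

lemma integral_inner_mul_inner_stdGaussian (p q : E) :
    ∫ a, ⟪p, a⟫ * ⟪q, a⟫ ∂stdGaussian E = ⟪p, q⟫ := by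
  rw [← covariance_inner_stdGaussian p q,
    covariance_eq_sub (memLp_two_inner_stdGaussian p) (memLp_two_inner_stdGaussian q)]
  simp [integral_inner_stdGaussian]

lemma hasLaw_inner_stdGaussian {v : E} (hv : ‖v‖ = 1) :
    HasLaw (fun a ↦ ⟪v, a⟫) (gaussianReal 0 1) (stdGaussian E) where
  map_eq := by
    have h := IsGaussian.map_eq_gaussianReal (μ := stdGaussian E) (innerSL ℝ v)
    rw [integral_strongDual_stdGaussian, variance_dual_stdGaussian, innerSL_apply_norm, hv] at h
    simpa using! h

lemma indepFun_starProjection_orthogonal_stdGaussian (U : Submodule ℝ E) :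
    IndepFun U.starProjection Uᗮ.starProjection (stdGaussian E) := by
  have hgauss : HasGaussianLaw (fun a ↦ (U.starProjection a, Uᗮ.starProjection a))
      (stdGaussian E) :=
    HasLaw.id.hasGaussianLaw.map_fun (U.starProjection.prod Uᗮ.starProjection)
  refine hgauss.indepFun_of_covariance_inner fun p q ↦ ?_
  simp only [← Submodule.inner_starProjection_left_eq_right]
  rw [covariance_inner_stdGaussian]
  exact Submodule.inner_right_of_mem_orthogonal (U.starProjection_apply_mem p)
    (Uᗮ.starProjection_apply_mem q)

lemma indepFun_inner_starProjection_orthogonal_stdGaussian {U : Submodule ℝ E} {v : E}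
    (hv : v ∈ U) : IndepFun (fun a ↦ ⟪v, a⟫) Uᗮ.starProjection (stdGaussian E) := by
  have hproj (a : E) : ⟪v, U.starProjection a⟫ = ⟪v, a⟫ := by
    rw [← Submodule.inner_starProjection_left_eq_right, Submodule.starProjection_eq_self_iff.2 hv]
  simpa [Function.comp_def, hproj] using!
    (indepFun_starProjection_orthogonal_stdGaussian U).comp
      (φ := fun a ↦ ⟪v, a⟫) (ψ := id) (by fun_prop) measurable_id

theorem integral_comp_inner_mul_inner_mul_inner_stdGaussian {v : E} (hv : ‖v‖ = 1) {f : ℝ → ℝ}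
    (hf : Integrable f (gaussianReal 0 1))
    (hf2 : Integrable (fun g ↦ f g * g ^ 2) (gaussianReal 0 1)) (p q : E) :
    ∫ a, f ⟪v, a⟫ * (⟪p, a⟫ * ⟪q, a⟫) ∂stdGaussian E =
      (∫ g, f g ∂gaussianReal 0 1) * ⟪p, q⟫ +
        (∫ g, f g * g ^ 2 ∂gaussianReal 0 1 - ∫ g, f g ∂gaussianReal 0 1) *
          (⟪v, p⟫ * ⟪v, q⟫) := by
  set R := (ℝ ∙ v)ᗮ.starProjection with hR
  have hRapply (a : E) : R a = a - ⟪v, a⟫ • v := by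
    rw [hR, Submodule.starProjection_orthogonal_val, Submodule.starProjection_unit_singleton ℝ hv]
  have hsplit (p a : E) : ⟪p, a⟫ = ⟪v, p⟫ * ⟪v, a⟫ + ⟪R p, a⟫ := by
    rw [hRapply, inner_sub_left, real_inner_smul_left]
    ring
  have hindep : IndepFun (fun a ↦ ⟪v, a⟫) (fun a ↦ (⟪R p, a⟫, ⟪R q, a⟫)) (stdGaussian E) := by
    simp only [hR, Submodule.inner_starProjection_left_eq_right]
    exact (indepFun_inner_starProjection_orthogonal_stdGaussian
      (Submodule.mem_span_singleton_self v)).comp (ψ := fun r ↦ (⟪p, r⟫, ⟪q, r⟫))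
      measurable_id (by fun_prop)
  have hRR : ⟪R p, R q⟫ = ⟪p, q⟫ - ⟪v, p⟫ * ⟪v, q⟫ := by
    rw [hsplit p q, add_sub_cancel_left, hR, ← Submodule.inner_starProjection_left_eq_right,
      Submodule.starProjection_eq_self_iff.2 (Submodule.starProjection_apply_mem _ _)]
  calc ∫ a, f ⟪v, a⟫ * (⟪p, a⟫ * ⟪q, a⟫) ∂stdGaussian E
      = ∫ a, f ⟪v, a⟫ * ((⟪v, p⟫ * ⟪v, a⟫ + ⟪R p, a⟫) * (⟪v, q⟫ * ⟪v, a⟫ + ⟪R q, a⟫))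
          ∂stdGaussian E := by simp only [← hsplit]
    _ = ⟪v, p⟫ * ⟪v, q⟫ * ∫ g, f g * g ^ 2 ∂gaussianReal 0 1 +
          (∫ g, f g ∂gaussianReal 0 1) * ⟪R p, R q⟫ := by
        rw [integral_comp_mul_add_mul_add_of_indepFun (hasLaw_inner_stdGaussian hv) hf hf2
          (memLp_two_inner_stdGaussian _) (memLp_two_inner_stdGaussian _)
          (integral_inner_stdGaussian _) (integral_inner_stdGaussian _) hindep,
          integral_inner_mul_inner_stdGaussian]
    _ = _ := by
        rw [hRR]
        ring

end StdGaussian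

theorem integral_comp_dotProduct_mul_eval_mul_eval_pi_gaussianReal {ι : Type*} [Fintype ι]
    [DecidableEq ι] {v : ι → ℝ} (hv : v ⬝ᵥ v = 1) {f : ℝ → ℝ}
    (hf : Integrable f (gaussianReal 0 1))
    (hf2 : Integrable (fun g ↦ f g * g ^ 2) (gaussianReal 0 1)) (i j : ι) :
    ∫ a, f (a ⬝ᵥ v) * (a i * a j) ∂Measure.pi (fun _ : ι ↦ gaussianReal 0 1) =
      (∫ g, f g ∂gaussianReal 0 1) * (if i = j then 1 else 0) +
        (∫ g, f g * g ^ 2 ∂gaussianReal 0 1 - ∫ g, f g ∂gaussianReal 0 1) * (v i * v j) := by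
  have hnorm : ‖WithLp.toLp 2 v‖ = 1 := by
    rw [EuclideanSpace.norm_eq, Real.sqrt_eq_one, ← hv]
    simp [dotProduct, sq]
  have h := integral_comp_inner_mul_inner_mul_inner_stdGaussian hnorm hf hf2
    (EuclideanSpace.single i 1) (EuclideanSpace.single j 1)
  rw [← map_pi_eq_stdGaussian, ← MeasurableEquiv.coe_toLp, integral_map_equiv] at h
  simpa [EuclideanSpace.inner_single_left, EuclideanSpace.inner_single_right,
    EuclideanSpace.inner_toLp_toLp, eq_comm] using h

lemma smul_one_add_smul_vecMulVec_self_mulVec {ι R : Type*} [Fintype ι] [DecidableEq ι]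
    [CommRing R] (c d : R) (v w : ι → R) :
    (c • (1 : Matrix ι ι R) + d • vecMulVec v v) *ᵥ w = c • w + (d * (v ⬝ᵥ w)) • v := by
  rw [add_mulVec, smul_mulVec, smul_mulVec, one_mulVec, vecMulVec_mulVec, op_smul_eq_smul,
    smul_smul]

section L2norm

variable {n : ℕ} {x : Fin n → ℝ}

lemma l2norm_eq_norm_toLp (x : Fin n → ℝ) : l2norm x = ‖WithLp.toLp 2 x‖ := by
  simp [l2norm, EuclideanSpace.norm_eq]

lemma l2norm_pos (hx : x ≠ 0) : 0 < l2norm x := by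
  simpa [l2norm_eq_norm_toLp] using hx

lemma dotProduct_self_eq_l2norm_sq (x : Fin n → ℝ) : x ⬝ᵥ x = l2norm x ^ 2 := by
  rw [l2norm_eq_norm_toLp, EuclideanSpace.real_norm_sq_eq]
  simp [dotProduct, sq]

lemma dotProduct_self_normalize (hx : x ≠ 0) :
    ((1 / l2norm x) • x) ⬝ᵥ ((1 / l2norm x) • x) = 1 := by
  have := (l2norm_pos hx).ne'
  rw [smul_dotProduct, dotProduct_smul, dotProduct_self_eq_l2norm_sq, smul_eq_mul, smul_eq_mul]
  field_simp

end L2norm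

section Truncation

/-- The truncated absolute value `|g| 1{l < |g| < u}`, whose Gaussian moments are `gamma0` and
`beta0`. -/
noncomputable def truncAbs (l u g : ℝ) : ℝ := if l < |g| ∧ |g| < u then |g| else 0

variable {l u : ℝ}

lemma measurable_truncAbs (l u : ℝ) : Measurable (truncAbs l u) := by
  refine Measurable.ite ?_ (by fun_prop) measurable_const
  exact measurableSet_Ioo.preimage (t := Set.Ioo l u) measurable_abs

lemma truncAbs_nonneg (l u g : ℝ) : 0 ≤ truncAbs l u g := by
  unfold truncAbs
  positivity

lemma truncAbs_le (l u g : ℝ) : truncAbs l u g ≤ |u| := by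
  unfold truncAbs
  split_ifs with h
  · exact h.2.le.trans (le_abs_self u)
  · exact abs_nonneg u

lemma integrable_truncAbs_mul (l u : ℝ) {μ : Measure ℝ} {f : ℝ → ℝ} (hf : Integrable f μ) :
    Integrable (fun g ↦ truncAbs l u g * f g) μ := by
  refine hf.bdd_mul (c := |u|) (measurable_truncAbs l u).aestronglyMeasurable
    (ae_of_all _ fun g ↦ ?_)
  rw [Real.norm_of_nonneg (truncAbs_nonneg l u g)]
  exact truncAbs_le l u g

lemma integrable_truncAbs (l u : ℝ) : Integrable (truncAbs l u) (gaussianReal 0 1) := by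
  simpa using integrable_truncAbs_mul l u (integrable_const (1 : ℝ))

lemma integrable_truncAbs_mul_sq (l u : ℝ) :
    Integrable (fun g ↦ truncAbs l u g * g ^ 2) (gaussianReal 0 1) :=
  integrable_truncAbs_mul l u (memLp_id_gaussianReal 2).integrable_sq

lemma ite_abs_mul_eq_mul_truncAbs {N : ℝ} (hN : 0 < N) (t c : ℝ) :
    (if l * N < |N * t| ∧ |N * t| < u * N then |N * t| * c else 0) = N * (truncAbs l u t * c) := by
  simp only [abs_mul, abs_of_pos hN, mul_comm _ N, mul_lt_mul_iff_right₀ hN, truncAbs]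
  split_ifs <;> ring

lemma beta0_eq_integral_truncAbs (l u : ℝ) :
    beta0 l u = ∫ g, truncAbs l u g * g ^ 2 ∂gaussianReal 0 1 - gamma0 l u := by
  unfold beta0 truncAbs
  congr with g
  split_ifs
  · rw [← sq_abs]
    ring
  · ring

lemma beta0_pos (hl : 1 ≤ l) (hlu : l < u) : 0 < beta0 l u := by
  have hsub (g : ℝ) :
      truncAbs l u g * (g ^ 2 - 1) = truncAbs l u g * g ^ 2 - truncAbs l u g := by ring
  have hβ : beta0 l u = ∫ g, truncAbs l u g * (g ^ 2 - 1) ∂gaussianReal 0 1 := by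
    simp only [hsub]
    rw [integral_sub (integrable_truncAbs_mul_sq l u) (integrable_truncAbs l u)]
    exact beta0_eq_integral_truncAbs l u
  have hpos {g : ℝ} (h : l < |g| ∧ |g| < u) : 0 < truncAbs l u g * (g ^ 2 - 1) := by
    have hg : 1 < |g| := hl.trans_lt h.1
    rw [truncAbs, if_pos h]
    exact mul_pos (one_pos.trans hg) (sub_pos.2 ((one_lt_sq_iff_one_lt_abs g).2 hg))
  rw [hβ, integral_pos_iff_support_of_nonneg]
  · have hsupp : Set.Ioo l u ⊆ Function.support fun g ↦ truncAbs l u g * (g ^ 2 - 1) := by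
      intro g hg
      have habs : |g| = g := abs_of_pos (one_pos.trans (hl.trans_lt hg.1))
      exact (hpos (habs.symm ▸ hg)).ne'
    refine (pos_iff_ne_zero.2 fun h ↦ ?_).trans_le (measure_mono hsupp)
    have hvol := gaussianReal_absolutelyContinuous' 0 one_ne_zero h
    exact absurd hvol (by simpa using hlu)
  · intro g
    by_cases h : l < |g| ∧ |g| < u
    · exact (hpos h).le
    · simp [truncAbs, h]
  · simp only [hsub]
    exact (integrable_truncAbs_mul_sq l u).sub (integrable_truncAbs l u)

end Truncation

theorem integral_ite_abs_dotProduct_mul_eval_mul_eval_piGauss {n : ℕ} {x : Fin n → ℝ}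
    (hx : x ≠ 0) (l u : ℝ) (i j : Fin n) :
    ∫ a, (if l * l2norm x < |a ⬝ᵥ x| ∧ |a ⬝ᵥ x| < u * l2norm x
        then |a ⬝ᵥ x| * (a i * a j) else 0) ∂piGauss n =
      l2norm x * (gamma0 l u * (if i = j then 1 else 0) +
        beta0 l u * ((x i / l2norm x) * (x j / l2norm x))) := by
  have hN := l2norm_pos hx
  have hdot (a : Fin n → ℝ) : a ⬝ᵥ x = l2norm x * (a ⬝ᵥ ((1 / l2norm x) • x)) := by
    rw [dotProduct_smul, smul_eq_mul, ← mul_assoc, mul_one_div_cancel hN.ne', one_mul]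
  calc ∫ a, (if l * l2norm x < |a ⬝ᵥ x| ∧ |a ⬝ᵥ x| < u * l2norm x
          then |a ⬝ᵥ x| * (a i * a j) else 0) ∂piGauss n
      = l2norm x * ∫ a, truncAbs l u (a ⬝ᵥ ((1 / l2norm x) • x)) * (a i * a j) ∂piGauss n := by
        simp only [hdot, ite_abs_mul_eq_mul_truncAbs hN, integral_const_mul]
    _ = l2norm x * (gamma0 l u * (if i = j then 1 else 0) +
          beta0 l u * (((1 / l2norm x) • x) i * ((1 / l2norm x) • x) j)) := by
        rw [beta0_eq_integral_truncAbs]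
        exact congrArg _ (integral_comp_dotProduct_mul_eval_mul_eval_pi_gaussianReal
          (dotProduct_self_normalize hx) (integrable_truncAbs l u)
          (integrable_truncAbs_mul_sq l u) i j)
    _ = _ := by simp only [Pi.smul_apply, smul_eq_mul, one_div_mul_eq_div]

/-- Let `a ~ N(0, I_n)`, `x ≠ 0` with `x̄ = x/‖x‖₂`, `1 < l < u`, `y = |⟨a,x⟩|`, and
`J = E[y · a aᵀ · 1{l‖x‖₂ < y < u‖x‖₂}]`.  Then `J = ‖x‖₂ (γ₀ I_n + β₀ x̄ x̄ᵀ)`,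
`β₀ > 0`, `x̄` is an eigenvector of `J` with eigenvalue `‖x‖₂(γ₀ + β₀)`, every vector
orthogonal to `x̄` is an eigenvector with eigenvalue `‖x‖₂ γ₀`, and
`‖x‖₂ γ₀ < ‖x‖₂(γ₀ + β₀)`: the normalized signal spans the leading eigenspace. -/
theorem stmt_8 (n : ℕ) (x : Fin n → ℝ) (hx : x ≠ 0) (l u : ℝ) (hl : 1 < l) (hlu : l < u)
    (J : Matrix (Fin n) (Fin n) ℝ)
    (hJ : ∀ i j, J i j =
      ∫ a : Fin n → ℝ,
        (if l * l2norm x < |a ⬝ᵥ x| ∧ |a ⬝ᵥ x| < u * l2norm x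
          then |a ⬝ᵥ x| * (a i * a j) else 0) ∂(piGauss n)) :
    (∀ i j, J i j = l2norm x *
        (gamma0 l u * (if i = j then (1 : ℝ) else 0) +
          beta0 l u * ((x i / l2norm x) * (x j / l2norm x)))) ∧
    0 < beta0 l u ∧
    J.mulVec ((1 / l2norm x) • x) =
      (l2norm x * (gamma0 l u + beta0 l u)) • ((1 / l2norm x) • x) ∧
    (∀ v : Fin n → ℝ, v ⬝ᵥ ((1 / l2norm x) • x) = 0 →
      J.mulVec v = (l2norm x * gamma0 l u) • v) ∧
    l2norm x * gamma0 l u < l2norm x * (gamma0 l u + beta0 l u) := by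
  have hentry (i j : Fin n) :=
    (hJ i j).trans (integral_ite_abs_dotProduct_mul_eval_mul_eval_piGauss hx l u i j)
  have hβ : 0 < beta0 l u := beta0_pos hl.le hlu
  have hnormalized := dotProduct_self_normalize hx
  set v := (1 / l2norm x) • x with hv
  have hJv : J = l2norm x • (gamma0 l u • 1 + beta0 l u • vecMulVec v v) := by
    ext i j
    simp only [hentry, hv, Matrix.smul_apply, Matrix.add_apply, one_apply, vecMulVec_apply,
      Pi.smul_apply, smul_eq_mul, one_div_mul_eq_div]
  have hmulVec (w : Fin n → ℝ) :
      J *ᵥ w = l2norm x • (gamma0 l u • w + (beta0 l u * (v ⬝ᵥ w)) • v) := by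
    rw [hJv, smul_mulVec, smul_one_add_smul_vecMulVec_self_mulVec]
  refine ⟨hentry, hβ, ?_, fun w hw ↦ ?_, ?_⟩
  · rw [hmulVec, hnormalized, mul_one, ← add_smul, smul_smul]
  · rw [hmulVec, dotProduct_comm, hw, mul_zero, zero_smul, add_zero, smul_smul]
  · exact mul_lt_mul_of_pos_left (lt_add_of_pos_right _ hβ) (l2norm_pos hx)
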